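/- Let W be the group of linear transformations of ℝ³ generated by r₁(a,b,c) = (b,a,c), r₂(a,b,c) = (a,b,a+b−c) and r₃(a,b,c) = (c,a+b−c,a). Then for every nonzero (a,b,c) ∈ ℝ³ there exist w ∈ W and a nonzero real number t such that the vector (a′,b′,c′) = t·w(a,b,c) satisfies a′ > 0, 2c′ ≥ a′ + b′ ≥ 0 and a′ ≥ c′ ≥ b′. -/

import Mathlib

open Matrix

/-- Matrix of r₁(a,b,c) = (b,a,c). -/
def M1 : Matrix (Fin 3) (Fin 3) ℝ := !![0, 1, 0; 1, 0, 0; 0, 0, 1]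

/-- Matrix of r₂(a,b,c) = (a,b,a+b−c). -/
def M2 : Matrix (Fin 3) (Fin 3) ℝ := !![1, 0, 0; 0, 1, 0; 1, 1, -1]

/-- Matrix of r₃(a,b,c) = (c,a+b−c,a). -/
def M3 : Matrix (Fin 3) (Fin 3) ℝ := !![0, 0, 1; 1, 1, -1; 1, 0, 0]

lemma M1_inv : M1 * M1 = 1 := by
  simp [M1, Matrix.mul_fin_three, Matrix.one_fin_three]

lemma M2_inv : M2 * M2 = 1 := by
  norm_num [M2, Matrix.mul_fin_three]
  exact Matrix.one_fin_three.symm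

lemma M3_inv : M3 * M3 = 1 := by
  norm_num [M3, Matrix.mul_fin_three]
  exact Matrix.one_fin_three.symm

/-- r₁ as an invertible linear transformation of ℝ³. -/
def u1 : GL (Fin 3) ℝ := ⟨M1, M1, M1_inv, M1_inv⟩

/-- r₂ as an invertible linear transformation of ℝ³. -/
def u2 : GL (Fin 3) ℝ := ⟨M2, M2, M2_inv, M2_inv⟩

/-- r₃ as an invertible linear transformation of ℝ³. -/
def u3 : GL (Fin 3) ℝ := ⟨M3, M3, M3_inv, M3_inv⟩

/-- The group W of linear transformations of ℝ³ generated by r₁, r₂, r₃. -/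
def W : Subgroup (GL (Fin 3) ℝ) := Subgroup.closure {u1, u2, u3}

/-- The conclusion: the orbit of the line through v meets the fundamental domain. -/
def Good (v : Fin 3 → ℝ) : Prop :=
    ∃ w ∈ W, ∃ t : ℝ, t ≠ 0 ∧ ∃ a b c : ℝ,
      t • ((w : Matrix (Fin 3) (Fin 3) ℝ).mulVec v) = ![a, b, c] ∧
      0 < a ∧ a + b ≤ 2 * c ∧ 0 ≤ a + b ∧ c ≤ a ∧ b ≤ c

lemma Good.of_mem {u : GL (Fin 3) ℝ} (hu : u ∈ W) {v : Fin 3 → ℝ}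
    (h : Good ((u : Matrix (Fin 3) (Fin 3) ℝ).mulVec v)) : Good v := by
  obtain ⟨w, hw, t, ht, a, b, c, e, h⟩ := h
  refine ⟨w * u, W.mul_mem hw hu, t, ht, a, b, c, ?_, h⟩
  rw [← e, Matrix.mulVec_mulVec, Units.val_mul]

lemma Good.of_neg {a b c : ℝ} (h : Good ![-a, -b, -c]) : Good ![a, b, c] := by
  obtain ⟨w, hw, t, ht, x, y, z, e, h⟩ := h
  refine ⟨w, hw, -t, neg_ne_zero.mpr ht, x, y, z, ?_, h⟩
  have : ![-a, -b, -c] = -![a, b, c] := by simp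
  rw [← e, this, Matrix.mulVec_neg, smul_neg, neg_smul]

lemma Good.r1 {a b c : ℝ} (h : Good ![b, a, c]) : Good ![a, b, c] := by
  apply Good.of_mem (u := u1) (Subgroup.subset_closure (by simp))
  convert h using 1
  ext i; fin_cases i <;> simp [u1, M1, Matrix.mulVec, dotProduct, Fin.sum_univ_three]

lemma Good.r2 {a b c : ℝ} (h : Good ![a, b, a + b - c]) : Good ![a, b, c] := by
  apply Good.of_mem (u := u2) (Subgroup.subset_closure (by simp))
  convert h using 1
  ext i; fin_cases i <;>
    simp [u2, M2, Matrix.mulVec, dotProduct, Fin.sum_univ_three, sub_eq_add_neg]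

lemma Good.r3 {a b c : ℝ} (h : Good ![c, a + b - c, a]) : Good ![a, b, c] := by
  apply Good.of_mem (u := u3) (Subgroup.subset_closure (by simp))
  convert h using 1
  ext i; fin_cases i <;>
    simp [u3, M3, Matrix.mulVec, dotProduct, Fin.sum_univ_three, sub_eq_add_neg]

lemma good_base {a b c : ℝ} (hv : ¬ (a = 0 ∧ b = 0 ∧ c = 0)) (h0 : 0 ≤ a + b)
    (h1 : b ≤ a) (h2 : a + b ≤ 2 * c) (h3 : c ≤ a) : Good ![a, b, c] := by
  refine ⟨1, W.one_mem, 1, one_ne_zero, a, b, c, by simp, ?_, h2, h0, h3, by linarith⟩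
  by_contra h
  exact hv ⟨by linarith, by linarith, by linarith⟩

lemma good_ac {a b c : ℝ} (hv : ¬ (a = 0 ∧ b = 0 ∧ c = 0)) (h0 : 0 ≤ a + b)
    (h1 : b ≤ a) (h2 : a + b ≤ 2 * c) : Good ![a, b, c] := by
  rcases le_total c a with h | h
  · exact good_base hv h0 h1 h2 h
  · apply Good.r3
    apply good_base _ (by linarith) (by linarith) (by linarith) h
    rintro ⟨x, y, z⟩
    exact hv ⟨by linarith, by linarith, by linarith⟩

lemma good_cd {a b c : ℝ} (hv : ¬ (a = 0 ∧ b = 0 ∧ c = 0)) (h0 : 0 ≤ a + b)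
    (h1 : b ≤ a) : Good ![a, b, c] := by
  rcases le_total (a + b) (2 * c) with h | h
  · exact good_ac hv h0 h1 h
  · apply Good.r2
    apply good_ac _ h0 h1 (by linarith)
    rintro ⟨x, y, z⟩
    exact hv ⟨by linarith, by linarith, by linarith⟩

lemma good_ab {a b c : ℝ} (hv : ¬ (a = 0 ∧ b = 0 ∧ c = 0)) (h0 : 0 ≤ a + b) :
    Good ![a, b, c] := by
  rcases le_total b a with h | h
  · exact good_cd hv h0 h
  · apply Good.r1
    apply good_cd _ (by linarith) h
    rintro ⟨x, y, z⟩
    exact hv ⟨by linarith, by linarith, by linarith⟩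

lemma good_all {a b c : ℝ} (hv : ¬ (a = 0 ∧ b = 0 ∧ c = 0)) : Good ![a, b, c] := by
  rcases le_total 0 (a + b) with h | h
  · exact good_ab hv h
  · apply Good.of_neg
    apply good_ab _ (by linarith)
    rintro ⟨x, y, z⟩
    exact hv ⟨by linarith, by linarith, by linarith⟩

theorem stmt8 (v : Fin 3 → ℝ) (hv : v ≠ 0) :
    ∃ w ∈ W, ∃ t : ℝ, t ≠ 0 ∧
      0 < (t • ((w : Matrix (Fin 3) (Fin 3) ℝ).mulVec v)) 0 ∧
      (t • ((w : Matrix (Fin 3) (Fin 3) ℝ).mulVec v)) 0 +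
          (t • ((w : Matrix (Fin 3) (Fin 3) ℝ).mulVec v)) 1 ≤
        2 * (t • ((w : Matrix (Fin 3) (Fin 3) ℝ).mulVec v)) 2 ∧
      0 ≤ (t • ((w : Matrix (Fin 3) (Fin 3) ℝ).mulVec v)) 0 +
          (t • ((w : Matrix (Fin 3) (Fin 3) ℝ).mulVec v)) 1 ∧
      (t • ((w : Matrix (Fin 3) (Fin 3) ℝ).mulVec v)) 2 ≤
        (t • ((w : Matrix (Fin 3) (Fin 3) ℝ).mulVec v)) 0 ∧
      (t • ((w : Matrix (Fin 3) (Fin 3) ℝ).mulVec v)) 1 ≤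
        (t • ((w : Matrix (Fin 3) (Fin 3) ℝ).mulVec v)) 2 := by
  have e : v = ![v 0, v 1, v 2] := by
    ext i; fin_cases i <;> rfl
  have hg : Good v := by
    rw [e]
    apply good_all
    rintro ⟨x, y, z⟩
    apply hv
    rw [e, x, y, z]
    simp
  obtain ⟨w, hw, t, ht, a, b, c, e', h⟩ := hg
  refine ⟨w, hw, t, ht, ?_⟩
  rw [e']
  exact h
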